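/- arXiv:1311.3512 — 5 statements merged into one kernel-verified Lean document; each statement's English description precedes it below -/
import Mathlib

section
/- Let n ≥ 1 and let −1 = z₀ < z₁ < ⋯ < z_n < z_{n+1} = 1 be an axisymmetric configuration with pattern u, mass m, and function ξ as in the context, and set ξ_k := ξ(z_k). Then ∫_{−1}^{1} ξ(z)²/(1−z²) dz = −2 + 2m² + Σ_{k=0}^{n−1} ((ξ_k − ((−1)^k + m)(1 − z_k))²/2)·log((1−z_k)/(1−z_{k+1})) + Σ_{k=1}^{n} ((ξ_k + ((−1)^k + m)(1 + z_k))²/2)·log((1+z_{k+1})/(1+z_k)). (This is the nonlocal part of the energy E_γ of an axisymmetric pattern on the sphere, up to the factor 2πγ; the omitted boundary terms k = n of the first sum and k = 0 of the second sum have vanishing coefficients.) -/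
/-- The axisymmetric step pattern with `n` interfaces located at `z 1 < ⋯ < z n`
(with `z 0 = -1`, `z (n+1) = 1`): `u(t) = (-1)^(k+1)` for `t ∈ [z k, z (k+1))`,
so `u = -1` on `[-1, z 1)`. -/
noncomputable def pattern (n : ℕ) (z : ℕ → ℝ) (t : ℝ) : ℝ :=
  (-1 : ℝ) ^ (((Finset.Icc 1 n).filter (fun i => z i ≤ t)).card + 1)

/-- The mass `m = (1/2)∫_{-1}^1 u(t) dt`. -/
noncomputable def mass (n : ℕ) (z : ℕ → ℝ) : ℝ :=
  (1 / 2) * ∫ t in (-1 : ℝ)..1, pattern n z t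

/-- `ξ(t) = ∫_{-1}^t (u(s) - m) ds`. -/
noncomputable def xi (n : ℕ) (z : ℕ → ℝ) (t : ℝ) : ℝ :=
  ∫ s in (-1 : ℝ)..t, (pattern n z s - mass n z)

/-- The potential `v(t) = ∫_0^t ξ(s)/(1-s²) ds`. -/
noncomputable def pot (n : ℕ) (z : ℕ → ℝ) (t : ℝ) : ℝ :=
  ∫ s in (0 : ℝ)..t, xi n z s / (1 - s ^ 2)

/-- `z` is an axisymmetric configuration with `n` interfaces:
`-1 = z 0 < z 1 < ⋯ < z n < z (n+1) = 1`. -/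
def IsConfig (n : ℕ) (z : ℕ → ℝ) : Prop :=
  z 0 = -1 ∧ z (n + 1) = 1 ∧ ∀ i j, i < j → j ≤ n + 1 → z i < z j

/-- The configuration is a critical point of `E_γ`: the Euler–Lagrange equation
`κ_g(z_k) + 4γ v(z_k) = λ` holds at every interface `z 1, …, z n`, with a single
constant `λ`; here `κ_g(z_k) = (-1)^(k+1) z_k / √(1 - z_k²)` is the signed geodesic
curvature of the interface circle with respect to the outer normal of `{u = 1}`. -/
def IsCritical (γ : ℝ) (n : ℕ) (z : ℕ → ℝ) : Prop :=
  ∃ lam : ℝ, ∀ k, 1 ≤ k → k ≤ n →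
    (-1 : ℝ) ^ (k + 1) * z k / Real.sqrt (1 - z k ^ 2) + 4 * γ * pot n z (z k) = lam

/-!
On `[z k, z (k+1)]` the function `ξ` is affine with slope `-c_k`, where `c_k = (-1)^k + m`. If an
affine function of slope `-c` takes the values `A` at `1` and `B` at `-1`, its square divided by
`1 - t²` is `-c² + (A²/2) / (1 - t) + (B²/2) / (1 + t)`, and the two poles integrate to the
logarithms. Since `ξ(±1) = 0`, a pole met by an interval has coefficient zero, so no integral is
singular. The constant parts add up to `-∑ c_k² (z (k+1) - z k) = -∫ (u - m)² = -(2 - 2 m²)`,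
because `u² = 1` and `∫ u = 2 m`.
-/

open MeasureTheory Set
open scoped Interval

section PartialFractions

variable {a c p q : ℝ}

lemma intervalIntegrable_const_mul_inv_sub (h : a ∈ [[p, q]] → c = 0) :
    IntervalIntegrable (fun t => c * (t - a)⁻¹) volume p q := by
  by_cases ha : a ∈ [[p, q]]
  · simp [h ha]
  · refine (intervalIntegral.intervalIntegrable_inv (fun t ht => ?_) (by fun_prop)).const_mul c
    exact sub_ne_zero.2 (ne_of_mem_of_not_mem ht ha)

lemma integral_const_mul_inv_sub (h : a ∈ [[p, q]] → c = 0) :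
    ∫ t in p..q, c * (t - a)⁻¹ = c * Real.log ((q - a) / (p - a)) := by
  by_cases ha : a ∈ [[p, q]]
  · simp [h ha]
  · have h0 : (0 : ℝ) ∉ [[p - a, q - a]] := by
      rw [← image_sub_const_uIcc]
      rintro ⟨t, ht, hta⟩
      exact ha (sub_eq_zero.1 hta ▸ ht)
    rw [intervalIntegral.integral_const_mul,
      intervalIntegral.integral_comp_sub_right (fun t => t⁻¹), integral_inv h0]

lemma affine_sq_div_one_sub_sq_eq {t : ℝ} (y s : ℝ) (ht : t ≠ 1) (ht' : t ≠ -1) :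
    (y - c * (t - s)) ^ 2 / (1 - t ^ 2) =
      -c ^ 2 + -((y - c * (1 - s)) ^ 2 / 2) * (t - 1)⁻¹
        + (y + c * (1 + s)) ^ 2 / 2 * (t - -1)⁻¹ := by
  have h1 : t - 1 ≠ 0 := sub_ne_zero.2 ht
  have h2 : t - -1 ≠ 0 := sub_ne_zero.2 ht'
  rw [show 1 - t ^ 2 = -((t - 1) * (t - -1)) by ring]
  field_simp
  ring

end PartialFractions

section PiecewiseAffine

variable {f : ℝ → ℝ}

section Affine

variable {c p q : ℝ}

lemma ae_sq_div_one_sub_sq_eq_of_affine (hf : ∀ t ∈ [[p, q]], f t = f p - c * (t - p)) :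
    ∀ᵐ t ∂volume, t ∈ Ι p q →
      -c ^ 2 + -((f p - c * (1 - p)) ^ 2 / 2) * (t - 1)⁻¹
        + (f p + c * (1 + p)) ^ 2 / 2 * (t - -1)⁻¹ = f t ^ 2 / (1 - t ^ 2) := by
  filter_upwards [volume.ae_ne 1, volume.ae_ne (-1)] with t ht ht' hmem
  rw [hf t (uIoc_subset_uIcc hmem), affine_sq_div_one_sub_sq_eq _ _ ht ht']

lemma residue_one_eq_zero_of_affine (h1 : f 1 = 0)
    (hf : ∀ t ∈ [[p, q]], f t = f p - c * (t - p)) (h : 1 ∈ [[p, q]]) :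
    -((f p - c * (1 - p)) ^ 2 / 2) = 0 := by
  simp [← hf 1 h, h1]

lemma residue_neg_one_eq_zero_of_affine (h2 : f (-1) = 0)
    (hf : ∀ t ∈ [[p, q]], f t = f p - c * (t - p)) (h : -1 ∈ [[p, q]]) :
    (f p + c * (1 + p)) ^ 2 / 2 = 0 := by
  have hval : f p + c * (1 + p) = f (-1) := by
    rw [hf _ h]
    ring
  simp [hval, h2]

lemma intervalIntegrable_sq_div_one_sub_sq_of_affine (h1 : f 1 = 0) (h2 : f (-1) = 0)
    (hf : ∀ t ∈ [[p, q]], f t = f p - c * (t - p)) :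
    IntervalIntegrable (fun t => f t ^ 2 / (1 - t ^ 2)) volume p q :=
  ((intervalIntegrable_const.add
      (intervalIntegrable_const_mul_inv_sub (residue_one_eq_zero_of_affine h1 hf))).add
    (intervalIntegrable_const_mul_inv_sub (residue_neg_one_eq_zero_of_affine h2 hf))).congr_ae
      ((ae_restrict_iff' measurableSet_uIoc).2 (ae_sq_div_one_sub_sq_eq_of_affine hf))

lemma integral_sq_div_one_sub_sq_of_affine (h1 : f 1 = 0) (h2 : f (-1) = 0)
    (hf : ∀ t ∈ [[p, q]], f t = f p - c * (t - p)) :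
    ∫ t in p..q, f t ^ 2 / (1 - t ^ 2) =
      -(c ^ 2 * (q - p))
      + (f p - c * (1 - p)) ^ 2 / 2 * Real.log ((1 - p) / (1 - q))
      + (f p + c * (1 + p)) ^ 2 / 2 * Real.log ((1 + q) / (1 + p)) := by
  have hA := residue_one_eq_zero_of_affine h1 hf
  have hB := residue_neg_one_eq_zero_of_affine h2 hf
  have iC : IntervalIntegrable (fun _ => -c ^ 2) volume p q := intervalIntegrable_const
  have iA := intervalIntegrable_const_mul_inv_sub hA
  have iB := intervalIntegrable_const_mul_inv_sub hB
  have hlog : Real.log ((q - 1) / (p - 1)) = -Real.log ((1 - p) / (1 - q)) := by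
    rw [← Real.log_inv, inv_div, ← neg_sub 1 q, ← neg_sub 1 p, neg_div_neg_eq]
  rw [← intervalIntegral.integral_congr_ae (ae_sq_div_one_sub_sq_eq_of_affine hf),
    intervalIntegral.integral_add (iC.add iA) iB, intervalIntegral.integral_add iC iA,
    intervalIntegral.integral_const, integral_const_mul_inv_sub hA, integral_const_mul_inv_sub hB,
    hlog, sub_neg_eq_add, sub_neg_eq_add, add_comm q, add_comm p, smul_eq_mul]
  ring

end Affine

lemma integral_sq_div_one_sub_sq_of_piecewise_affine {N : ℕ} {z c : ℕ → ℝ}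
    (h1 : f 1 = 0) (h2 : f (-1) = 0)
    (hf : ∀ k < N, ∀ t ∈ [[z k, z (k + 1)]], f t = f (z k) - c k * (t - z k)) :
    ∫ t in z 0..z N, f t ^ 2 / (1 - t ^ 2) =
      -∑ k ∈ Finset.range N, c k ^ 2 * (z (k + 1) - z k)
      + ∑ k ∈ Finset.range N,
          (f (z k) - c k * (1 - z k)) ^ 2 / 2 * Real.log ((1 - z k) / (1 - z (k + 1)))
      + ∑ k ∈ Finset.range N,
          (f (z k) + c k * (1 + z k)) ^ 2 / 2 * Real.log ((1 + z (k + 1)) / (1 + z k)) := by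
  rw [← intervalIntegral.sum_integral_adjacent_intervals fun k hk =>
      intervalIntegrable_sq_div_one_sub_sq_of_affine h1 h2 (hf k hk),
    Finset.sum_congr rfl fun k hk =>
      integral_sq_div_one_sub_sq_of_affine h1 h2 (hf k (Finset.mem_range.1 hk)),
    Finset.sum_add_distrib, Finset.sum_add_distrib, Finset.sum_neg_distrib]

end PiecewiseAffine

section Pattern

variable (n : ℕ) (z : ℕ → ℝ)

lemma pattern_sq (t : ℝ) : pattern n z t ^ 2 = 1 := by
  rw [pattern, ← pow_mul, mul_comm, pow_mul, neg_one_sq, one_pow]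

lemma measurable_pattern : Measurable (pattern n z) := by
  have hcard : Measurable fun t => ((Finset.Icc 1 n).filter (fun i => z i ≤ t)).card := by
    simp only [Finset.card_filter]
    exact Finset.measurable_sum _ fun i _ =>
      Measurable.ite measurableSet_Ici measurable_const measurable_const
  exact measurable_from_top.comp (hcard.add_const 1)

lemma intervalIntegrable_pattern (a b : ℝ) : IntervalIntegrable (pattern n z) volume a b := by
  refine (intervalIntegrable_const (c := (1 : ℝ))).mono_fun
    (measurable_pattern n z).aestronglyMeasurable (.of_forall fun t => ?_)
  simp [pattern]

lemma intervalIntegrable_pattern_sub_mass (a b : ℝ) :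
    IntervalIntegrable (fun t => pattern n z t - mass n z) volume a b :=
  (intervalIntegrable_pattern n z a b).sub intervalIntegrable_const

lemma integral_pattern : ∫ t in (-1 : ℝ)..1, pattern n z t = 2 * mass n z := by
  rw [mass]
  ring

lemma xi_neg_one : xi n z (-1) = 0 := intervalIntegral.integral_same

lemma xi_one : xi n z 1 = 0 := by
  rw [xi, intervalIntegral.integral_sub (intervalIntegrable_pattern n z _ _)
    intervalIntegrable_const, integral_pattern, intervalIntegral.integral_const, smul_eq_mul]
  ring

lemma pattern_sub_mass_sq (t : ℝ) :
    (pattern n z t - mass n z) ^ 2 = (1 + mass n z ^ 2) - 2 * mass n z * pattern n z t := by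
  linear_combination pattern_sq n z t

lemma intervalIntegrable_pattern_sub_mass_sq (a b : ℝ) :
    IntervalIntegrable (fun t => (pattern n z t - mass n z) ^ 2) volume a b := by
  simp only [pattern_sub_mass_sq]
  exact intervalIntegrable_const.sub ((intervalIntegrable_pattern n z a b).const_mul _)

lemma integral_pattern_sub_mass_sq :
    ∫ t in (-1 : ℝ)..1, (pattern n z t - mass n z) ^ 2 = 2 - 2 * mass n z ^ 2 := by
  simp only [pattern_sub_mass_sq]
  rw [intervalIntegral.integral_sub intervalIntegrable_const
      ((intervalIntegrable_pattern n z _ _).const_mul _),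
    intervalIntegral.integral_const_mul, integral_pattern, intervalIntegral.integral_const,
    smul_eq_mul]
  ring

end Pattern

namespace IsConfig

variable {n k : ℕ} {z : ℕ → ℝ} {t : ℝ}

lemma strictMonoOn (hz : IsConfig n z) : StrictMonoOn z (Iic (n + 1)) :=
  fun i _ j hj hij => hz.2.2 i j hij hj

lemma apply_le_apply_succ (hz : IsConfig n z) (hk : k ≤ n) : z k ≤ z (k + 1) :=
  (hz.2.2 k (k + 1) k.lt_succ_self (Nat.succ_le_succ hk)).le

lemma pattern_eq_of_mem_Ico (hz : IsConfig n z) (hk : k ≤ n) (ht : t ∈ Ico (z k) (z (k + 1))) :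
    pattern n z t = (-1) ^ (k + 1) := by
  have hle_iff (i : ℕ) (hi : i ≤ n) : z i ≤ t ↔ i ≤ k := by
    refine ⟨fun h => Nat.lt_succ_iff.1 ?_, fun h => le_trans ?_ ht.1⟩
    · exact (hz.strictMonoOn.lt_iff_lt (mem_Iic.2 (by omega)) (mem_Iic.2 (by omega))).1
        (h.trans_lt ht.2)
    · exact (hz.strictMonoOn.le_iff_le (mem_Iic.2 (by omega)) (mem_Iic.2 (by omega))).2 h
  have hfilter : (Finset.Icc 1 n).filter (fun i => z i ≤ t) = Finset.Icc 1 k := by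
    ext i
    simp only [Finset.mem_filter, Finset.mem_Icc]
    grind
  rw [pattern, hfilter, Nat.card_Icc, Nat.add_sub_cancel]

lemma integral_comp_pattern (hz : IsConfig n z) (hk : k ≤ n) (ht : t ∈ Icc (z k) (z (k + 1)))
    (g : ℝ → ℝ) : ∫ s in z k..t, g (pattern n z s) = (t - z k) * g ((-1) ^ (k + 1)) := by
  have hconst : EqOn (fun s => g (pattern n z s)) (fun _ => g ((-1) ^ (k + 1))) (Ioo (z k) t) :=
    fun s hs => congrArg g (hz.pattern_eq_of_mem_Ico hk ⟨hs.1.le, hs.2.trans_le ht.2⟩)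
  rw [intervalIntegral.integral_congr_Ioo_of_le ht.1 hconst, intervalIntegral.integral_const,
    smul_eq_mul]

lemma xi_eq_of_mem_Icc (hz : IsConfig n z) (hk : k ≤ n) (ht : t ∈ Icc (z k) (z (k + 1))) :
    xi n z t = xi n z (z k) - ((-1) ^ k + mass n z) * (t - z k) := by
  have hincr : xi n z t - xi n z (z k) = (t - z k) * ((-1) ^ (k + 1) - mass n z) := by
    rw [xi, xi, intervalIntegral.integral_interval_sub_left
      (intervalIntegrable_pattern_sub_mass n z _ _) (intervalIntegrable_pattern_sub_mass n z _ _)]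
    exact hz.integral_comp_pattern hk ht (· - mass n z)
  rw [pow_succ] at hincr
  linear_combination hincr

lemma sum_slope_sq_mul_length (hz : IsConfig n z) :
    ∑ k ∈ Finset.range (n + 1), ((-1) ^ k + mass n z) ^ 2 * (z (k + 1) - z k) =
      2 - 2 * mass n z ^ 2 := by
  have hpiece : ∀ k ∈ Finset.range (n + 1), ((-1) ^ k + mass n z) ^ 2 * (z (k + 1) - z k) =
      ∫ t in z k..z (k + 1), (pattern n z t - mass n z) ^ 2 := fun k hk => by
    have hkn : k ≤ n := Nat.lt_succ_iff.1 (Finset.mem_range.1 hk)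
    rw [hz.integral_comp_pattern hkn (right_mem_Icc.2 (hz.apply_le_apply_succ hkn))
      fun u => (u - mass n z) ^ 2]
    ring
  rw [Finset.sum_congr rfl hpiece, intervalIntegral.sum_integral_adjacent_intervals fun k _ =>
    intervalIntegrable_pattern_sub_mass_sq n z (z k) (z (k + 1)), hz.1, hz.2.1,
    integral_pattern_sub_mass_sq]

lemma first_affine_piece_at_neg_one (hz : IsConfig n z) :
    xi n z (z 0) + ((-1) ^ 0 + mass n z) * (1 + z 0) = 0 := by
  simp [hz.1, xi_neg_one]

lemma last_affine_piece_at_one (hz : IsConfig n z) :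
    xi n z (z n) - ((-1) ^ n + mass n z) * (1 - z n) = 0 := by
  have h1 : (1 : ℝ) ∈ Icc (z n) (z (n + 1)) := by
    simpa only [hz.2.1] using right_mem_Icc.2 (hz.apply_le_apply_succ le_rfl)
  rw [← hz.xi_eq_of_mem_Icc le_rfl h1, xi_one]

end IsConfig

/-- The nonlocal part of the energy of an axisymmetric pattern:
`∫_{-1}^1 ξ(z)²/(1-z²) dz` equals the explicit expression
`-2 + 2m² + Σ_{k=0}^{n-1} ((ξ_k - ((-1)^k+m)(1-z_k))²/2) log((1-z_k)/(1-z_{k+1}))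
 + Σ_{k=1}^{n} ((ξ_k + ((-1)^k+m)(1+z_k))²/2) log((1+z_{k+1})/(1+z_k))`. -/
theorem nonlocal_energy_formula (n : ℕ) (hn : 1 ≤ n) (z : ℕ → ℝ) (hz : IsConfig n z) :
    (∫ t in (-1 : ℝ)..1, (xi n z t) ^ 2 / (1 - t ^ 2)) =
      -2 + 2 * (mass n z) ^ 2
      + ∑ k ∈ Finset.range n,
          ((xi n z (z k) - ((-1 : ℝ) ^ k + mass n z) * (1 - z k)) ^ 2 / 2) *
            Real.log ((1 - z k) / (1 - z (k + 1)))
      + ∑ k ∈ Finset.Icc 1 n,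
          ((xi n z (z k) + ((-1 : ℝ) ^ k + mass n z) * (1 + z k)) ^ 2 / 2) *
            Real.log ((1 + z (k + 1)) / (1 + z k)) := by
  have haffine : ∀ k < n + 1, ∀ t ∈ [[z k, z (k + 1)]],
      xi n z t = xi n z (z k) - ((-1) ^ k + mass n z) * (t - z k) := fun k hk t ht => by
    rw [uIcc_of_le (hz.apply_le_apply_succ (Nat.lt_succ_iff.1 hk))] at ht
    exact hz.xi_eq_of_mem_Icc (Nat.lt_succ_iff.1 hk) ht
  have henergy :=
    integral_sq_div_one_sub_sq_of_piecewise_affine (xi_one n z) (xi_neg_one n z) haffine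
  rw [hz.1, hz.2.1, hz.sum_slope_sq_mul_length, Finset.sum_range_succ _ n,
    hz.last_affine_piece_at_one, Finset.range_eq_Ico (n + 1),
    Finset.sum_eq_sum_Ico_succ_bot n.add_one_pos, hz.first_affine_piece_at_neg_one, zero_add,
    Finset.Ico_add_one_right_eq_Icc] at henergy
  rw [henergy]
  ring
end

section
/- For α ∈ (0,1) and γ > 0 define, for x ∈ (α,1), e(x;α,γ) := √(1−((α+x)/2)²) + √(1−((1+x)/2)²) + γ·[((α−x)/2)·f((α+x)/2) + ((x−1)/2)·f((x+1)/2)], where f(t) = (1−t)log(1−t) + (1+t)log(1+t) (extended continuously by f(±1) = 2 log 2), and let L(α,γ) := √(1−((1+α)/2)²) + γ·((α−1)/2)·f((α+1)/2), which equals lim_{x→1⁻} e(x;α,γ). Then for every α ∈ (0,1) there exists γ₀ > 0 such that for every γ ≥ γ₀ there exists x ∈ (α,1) with e(x;α,γ) < L(α,γ). -/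
/-!
Up to the factor `-1/2`, the coefficient of `γ` in `L(α,γ)` is the midpoint rule for `∫_α^1 f` on
the single interval `[α,1]`, and the one in `e(x;α,γ)` is the midpoint rule on the subdivision
`α < x < 1`. The midpoint `(α+1)/2` is the average of `(α+x)/2` and `(x+1)/2` with weights
proportional to `x-α` and `1-x`, so refining the subdivision strictly increases the midpoint rule of
the strictly convex function `f`. Hence, for every fixed `x`, the difference `e(x;α,γ) - L(α,γ)` is
an affine function of `γ` with negative slope.
-/


/-- `f(t) = (1-t)log(1-t) + (1+t)log(1+t)`.  Since `Real.log 0 = 0` in Lean, this formula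
automatically realizes the continuous extension `f(±1) = 2 log 2`. -/
noncomputable def fLog (t : ℝ) : ℝ :=
  (1 - t) * Real.log (1 - t) + (1 + t) * Real.log (1 + t)

/-- The contribution `e(x;α,γ)` of the region between the roots `α` and `β = 1` of `ξ`
to the energy `E_γ` (up to an additive constant), with an interface pair of midpoint `x`:
perimeter term plus `γ` times the nonlocal term. -/
noncomputable def eNearPole (x α γ : ℝ) : ℝ :=
  Real.sqrt (1 - ((α + x) / 2) ^ 2) + Real.sqrt (1 - ((1 + x) / 2) ^ 2)
    + γ * (((α - x) / 2) * fLog ((α + x) / 2) + ((x - 1) / 2) * fLog ((x + 1) / 2))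

/-- `L(α,γ)`, the energy value of the configuration with no interfaces near the pole. -/
noncomputable def LNearPole (α γ : ℝ) : ℝ :=
  Real.sqrt (1 - ((1 + α) / 2) ^ 2) + γ * ((α - 1) / 2) * fLog ((α + 1) / 2)

open Set Filter Topology

theorem strictConvexOn_comp_affineMap {𝕜 E F β : Type*} [Ring 𝕜] [PartialOrder 𝕜]
    [AddCommGroup E] [Module 𝕜 E] [AddCommGroup F] [Module 𝕜 F]
    [AddCommMonoid β] [PartialOrder β] [SMul 𝕜 β] {s : Set F} {f : F → β}
    (hf : StrictConvexOn 𝕜 s f) {g : E →ᵃ[𝕜] F} (hg : Function.Injective g) :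
    StrictConvexOn 𝕜 (g ⁻¹' s) (f ∘ g) := by
  refine ⟨hf.1.affine_preimage g, fun u hu v hv huv a b ha hb hab => ?_⟩
  rw [Function.comp_apply, Convex.combo_affine_apply hab]
  exact hf.2 hu hv (hg.ne huv) ha hb hab

section LinearOrderedField

variable {𝕜 : Type*} [Field 𝕜] [LinearOrder 𝕜] [IsStrictOrderedRing 𝕜]

/-- The one-interval midpoint rule for the integral of `f` over `[a, b]`, in terms of which the
nonlocal parts of the energies `eNearPole` and `LNearPole` are expressed. -/
def midpointRule (f : 𝕜 → 𝕜) (a b : 𝕜) : 𝕜 :=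
  (b - a) * f ((a + b) / 2)

theorem midpointRule_lt_midpointRule_add_midpointRule {f : 𝕜 → 𝕜} {a x b : 𝕜}
    (hf : StrictConvexOn 𝕜 (Icc a b) f) (hx : x ∈ Ioo a b) :
    midpointRule f a b < midpointRule f a x + midpointRule f x b := by
  obtain ⟨hax, hxb⟩ := hx
  have secant := hf.secant_strict_mono_aux1 (x := (a + x) / 2) (y := (a + b) / 2)
    (z := (x + b) / 2) ⟨by linarith, by linarith⟩ ⟨by linarith, by linarith⟩
    (by linarith) (by linarith)
  unfold midpointRule
  linarith

theorem eventually_sub_mul_lt_sub_mul (c d : 𝕜) {p q : 𝕜} (hqp : q < p) :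
    ∀ᶠ t in atTop, c - t * p < d - t * q := by
  filter_upwards [eventually_gt_atTop ((c - d) / (p - q))] with t ht
  rw [div_lt_iff₀ (sub_pos.2 hqp)] at ht
  linarith

end LinearOrderedField

theorem continuous_fLog : Continuous fLog :=
  (Real.continuous_mul_log.comp (continuous_const.sub continuous_id)).add
    (Real.continuous_mul_log.comp (continuous_const.add continuous_id))

theorem strictConvexOn_fLog : StrictConvexOn ℝ (Icc (-1) 1) fLog := by
  have one_sub := strictConvexOn_comp_affineMap Real.strictConvexOn_mul_log
    (g := AffineMap.const ℝ ℝ 1 - AffineMap.id ℝ ℝ) sub_right_injective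
  have one_add := Real.strictConvexOn_mul_log.translate_right 1
  exact (one_sub.subset (fun _ ht => sub_nonneg.2 ht.2) (convex_Icc _ _)).add
    (one_add.subset (fun _ ht => neg_le_iff_add_nonneg'.1 ht.1) (convex_Icc _ _))

theorem eNearPole_eq_sub_mul_midpointRule (x α γ : ℝ) :
    eNearPole x α γ = √(1 - ((α + x) / 2) ^ 2) + √(1 - ((1 + x) / 2) ^ 2)
      - γ * ((midpointRule fLog α x + midpointRule fLog x 1) / 2) := by
  unfold eNearPole midpointRule
  ring

theorem LNearPole_eq_sub_mul_midpointRule (α γ : ℝ) :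
    LNearPole α γ = √(1 - ((1 + α) / 2) ^ 2) - γ * (midpointRule fLog α 1 / 2) := by
  unfold LNearPole midpointRule
  ring

theorem continuous_eNearPole (α γ : ℝ) : Continuous fun x => eNearPole x α γ := by
  have := continuous_fLog
  unfold eNearPole
  fun_prop

theorem eNearPole_one (α γ : ℝ) : eNearPole 1 α γ = LNearPole α γ := by
  rw [eNearPole_eq_sub_mul_midpointRule, LNearPole_eq_sub_mul_midpointRule]
  norm_num [midpointRule, add_comm α 1]

theorem eventually_eNearPole_lt_LNearPole {α x : ℝ} (hα : -1 ≤ α) (hx : x ∈ Ioo α 1) :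
    ∀ᶠ γ in atTop, eNearPole x α γ < LNearPole α γ := by
  have hf : StrictConvexOn ℝ (Icc α 1) fLog :=
    strictConvexOn_fLog.subset (Icc_subset_Icc_left hα) (convex_Icc α 1)
  simp only [eNearPole_eq_sub_mul_midpointRule, LNearPole_eq_sub_mul_midpointRule]
  exact eventually_sub_mul_lt_sub_mul _ _
    (div_lt_div_of_pos_right (midpointRule_lt_midpointRule_add_midpointRule hf hx) two_pos)

theorem exists_energy_below_pole_limit_general {α : ℝ} (hα : α ∈ Ico (-1) 1) :
    (∀ γ : ℝ, Tendsto (fun x => eNearPole x α γ) (𝓝[<] 1) (𝓝 (LNearPole α γ))) ∧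
    ∀ x ∈ Ioo α 1, ∃ γ₀ > (0 : ℝ), ∀ γ ≥ γ₀, eNearPole x α γ < LNearPole α γ := by
  refine ⟨fun γ => ?_, fun x hx => ?_⟩
  · rw [← eNearPole_one]
    exact (continuous_eNearPole α γ).continuousWithinAt
  · obtain ⟨γ₀, hγ₀⟩ := eventually_atTop.1 (eventually_eNearPole_lt_LNearPole hα.1 hx)
    exact ⟨max γ₀ 1, by positivity, fun γ hγ => hγ₀ γ (le_of_max_le_left hγ)⟩

/-- Lemma on poles.  `L(α,γ) = lim_{x→1⁻} e(x;α,γ)`, and for every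
`α ∈ (0,1)` there is `γ₀ > 0` such that for every `γ ≥ γ₀` some `x ∈ (α,1)` satisfies
`e(x;α,γ) < L(α,γ)`: when `γ` is large an interface pair strictly below the pole has
strictly smaller energy than the configuration with no interfaces near the pole. -/
theorem exists_energy_below_pole_limit :
    (∀ α ∈ Set.Ioo (0 : ℝ) 1, ∀ γ : ℝ,
      Filter.Tendsto (fun x => eNearPole x α γ) (nhdsWithin 1 (Set.Iio 1))
        (nhds (LNearPole α γ))) ∧
    ∀ α ∈ Set.Ioo (0 : ℝ) 1, ∃ γ₀ > (0 : ℝ), ∀ γ ≥ γ₀,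
      ∃ x ∈ Set.Ioo α 1, eNearPole x α γ < LNearPole α γ := by
  have mem_Ico {α : ℝ} (hα : α ∈ Ioo 0 1) : α ∈ Ico (-1) 1 := ⟨by linarith [hα.1], hα.2⟩
  refine ⟨fun α hα => (exists_energy_below_pole_limit_general (mem_Ico hα)).1, fun α hα => ?_⟩
  obtain ⟨x, hx⟩ := exists_between hα.2
  obtain ⟨γ₀, hγ₀, hlt⟩ := (exists_energy_below_pole_limit_general (mem_Ico hα)).2 x hx
  exact ⟨γ₀, hγ₀, fun γ hγ => ⟨x, hx, hlt γ hγ⟩⟩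
end

section
/- For n ≥ 1 let Z := {z ∈ ℝⁿ : 0 < z₁ < ⋯ < z_n < 1} and let M := {z ∈ ℝⁿ : Σ_{k=1}^{n} (−1)^{n−k} z_k = 1/2} (the affine subspace on which the symmetric pattern below has mass 0). For z ∈ Z let u_z : [−1,1] → ℝ be the axisymmetric pattern with 2n interfaces at −z_n < ⋯ < −z₁ < z₁ < ⋯ < z_n, equal to −1 on [−1,−z_n) and alternating between −1 and +1 across interfaces; set ξ_z(t) := ∫_{−1}^{t} u_z(s) ds and F_γ(z) := 2 Σ_{k=1}^{n} √(1−z_k²) + γ ∫_{−1}^{1} ξ_z(t)²/(1−t²) dt. Then for every n ≥ 1 there exists γ₀ > 0 such that for every γ ≥ γ₀ the function F_γ admits a local minimizer in M ∩ Z: there exist z* ∈ M ∩ Z and ε > 0 such that F_γ(z*) ≤ F_γ(z) for every z ∈ M ∩ Z with |z − z*| < ε. -/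
/-!
The energy even attains its minimum over `M ∩ Z` once `γ` is large.

In the variable `x = |t| ∈ [0, 1]` the pattern is, up to sign, a product of one step function per
interface. With `Q(x)` the integral of this product over `[x, 1]`, the mass constraint reads
`Q(0) = 0` and the nonlocal term is `2 H`, where `H = ∫₀¹ Q² / (1 - x²)`. The product does not
require the interfaces to be ordered or distinct, so `H` extends continuously to the compact set of
zero-mass configurations in the cube `[0, 1]ⁿ`.

No degenerate configuration minimizes `H`. Two coinciding interfaces, or one at the equator, change
the pattern only by a global sign, so they can be moved to the pole `x = 1` for free. An interface
at the pole can be used to slide the polar cap `(b, 1]`, where `b` is the outermost interface below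
the pole, towards the equator: the interfaces `b, 1` become `b - δ, 1 - δ`. This preserves the mass
and strictly decreases `H`.

By compactness, `H` exceeds its minimum by a fixed gap on degenerate configurations, whereas the
perimeter is bounded. Hence for large `γ` the minimizers of the full energy are nondegenerate.
-/

/-- The equatorially symmetric axisymmetric pattern `u_z` with `2n` interfaces located at
`-z_{n-1} < ⋯ < -z_0 < z_0 < ⋯ < z_{n-1}` (indices `0,…,n-1` of `Fin n`), equal to `-1`
near the south pole and alternating between `-1` and `+1` across interfaces. -/
noncomputable def symPattern (n : ℕ) (z : EuclideanSpace ℝ (Fin n)) (t : ℝ) : ℝ :=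
  (-1 : ℝ) ^ (((Finset.univ : Finset (Fin n)).filter (fun i => z i ≤ t)).card
      + ((Finset.univ : Finset (Fin n)).filter (fun i => -z i ≤ t)).card + 1)

/-- `ξ_z(t) = ∫_{-1}^t u_z(s) ds`. -/
noncomputable def symXi (n : ℕ) (z : EuclideanSpace ℝ (Fin n)) (t : ℝ) : ℝ :=
  ∫ s in (-1 : ℝ)..t, symPattern n z s

/-- `F_γ(z) = 2 Σ_k √(1−z_k²) + γ ∫_{-1}^1 ξ_z(t)²/(1−t²) dt`, i.e. `(1/π) E_γ(u_z)`. -/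
noncomputable def symEnergy (n : ℕ) (γ : ℝ) (z : EuclideanSpace ℝ (Fin n)) : ℝ :=
  2 * ∑ i, Real.sqrt (1 - z i ^ 2)
    + γ * ∫ t in (-1 : ℝ)..1, (symXi n z t) ^ 2 / (1 - t ^ 2)

/-- The open simplex `Z = {0 < z_1 < ⋯ < z_n < 1}`. -/
def simplexZ (n : ℕ) : Set (EuclideanSpace ℝ (Fin n)) :=
  {z | StrictMono z ∧ ∀ i, z i ∈ Set.Ioo (0 : ℝ) 1}

/-- The mass-constraint affine subspace `M = {Σ_{k=1}^n (−1)^{n−k} z_k = 1/2}`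
(indices shifted so that `z_k` of the paper is `z (k-1)` here). -/
def massM (n : ℕ) : Set (EuclideanSpace ℝ (Fin n)) :=
  {z | ∑ i : Fin n, (-1 : ℝ) ^ (n - 1 - (i : ℕ)) * z i = 1 / 2}

open Filter Function MeasureTheory Set Topology

/-! ### Penalization on a compact set -/

lemma exists_forall_ge_exists_isMinOn_add_mul {X : Type*} [TopologicalSpace X] {K U : Set X}
    {P H : X → ℝ} (hK : IsCompact K) (hne : K.Nonempty) (hU : IsOpen U) (hP : ContinuousOn P K)
    (hH : ContinuousOn H K) (hlt : ∀ x ∈ K \ U, ∃ y ∈ K, H y < H x) :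
    ∃ γ₀ > 0, ∀ γ ≥ γ₀, ∃ x ∈ K ∩ U, IsMinOn (fun x => P x + γ * H x) K x := by
  obtain ⟨x₀, hx₀, hx₀min⟩ := hK.exists_isMinOn hne hH
  obtain ⟨c, hc, hgap⟩ : ∃ c > 0, ∀ x ∈ K \ U, H x₀ + c ≤ H x := by
    rcases (K \ U).eq_empty_or_nonempty with hempty | hne'
    · exact ⟨1, one_pos, by simp [hempty]⟩
    · obtain ⟨x₁, hx₁, hx₁min⟩ := (hK.diff hU).exists_isMinOn hne' (hH.mono sdiff_subset)
      obtain ⟨y, hy, hyx₁⟩ := hlt x₁ hx₁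
      have hy' : H x₀ ≤ H y := hx₀min hy
      exact ⟨H x₁ - H x₀, by linarith, fun x hx => by have : H x₁ ≤ H x := hx₁min hx; linarith⟩
  obtain ⟨C, hC⟩ := hK.exists_bound_of_continuousOn hP
  have hC₀ : 0 ≤ C := (norm_nonneg _).trans (hC x₀ hx₀)
  refine ⟨(2 * C + 1) / c, by positivity, fun γ hγ => ?_⟩
  obtain ⟨x, hx, hxmin⟩ := hK.exists_isMinOn hne (hP.add (continuousOn_const.mul hH))
  refine ⟨x, ⟨hx, ?_⟩, hxmin⟩
  by_contra hxU
  have hle : P x + γ * H x ≤ P x₀ + γ * H x₀ := hxmin hx₀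
  have hγc : 2 * C + 1 ≤ γ * c := (div_le_iff₀ hc).1 hγ
  have hγ₀ : 0 ≤ γ := le_trans (by positivity) hγ
  have hγH : γ * (H x₀ + c) ≤ γ * H x := mul_le_mul_of_nonneg_left (hgap x ⟨hx, hxU⟩) hγ₀
  linarith [(abs_le.1 (hC x hx)).1, (abs_le.1 (hC x₀ hx₀)).2]

/-! ### Step functions -/

/-- The sign pattern on the line with a single interface, at `c`. -/
noncomputable def stepSign (c x : ℝ) : ℝ :=
  if x ≤ c then -1 else 1

section stepSign

variable {c x : ℝ}

lemma stepSign_of_le (h : x ≤ c) : stepSign c x = -1 := if_pos h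

lemma stepSign_of_lt (h : c < x) : stepSign c x = 1 := if_neg h.not_ge

lemma stepSign_mul_self (c x : ℝ) : stepSign c x * stepSign c x = 1 := by
  unfold stepSign
  split_ifs <;> norm_num

lemma measurable_stepSign (c : ℝ) : Measurable (stepSign c) :=
  Measurable.ite measurableSet_Iic measurable_const measurable_const

lemma continuousAt_stepSign_left (h : c ≠ x) : ContinuousAt (fun c => stepSign c x) c := by
  rcases h.lt_or_gt with h | h
  · refine continuousAt_const.congr (f := fun _ => 1) ?_
    filter_upwards [gt_mem_nhds h] with c hc using (stepSign_of_lt hc).symm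
  · refine continuousAt_const.congr (f := fun _ => -1) ?_
    filter_upwards [lt_mem_nhds h] with c hc using (stepSign_of_le hc.le).symm

lemma intervalIntegrable_stepSign (c a b : ℝ) :
    IntervalIntegrable (stepSign c) volume a b := by
  refine (intervalIntegrable_const (c := (1 : ℝ))).mono_fun
    (measurable_stepSign c).aestronglyMeasurable (Eventually.of_forall fun x => ?_)
  unfold stepSign
  dsimp only
  split_ifs <;> simp

lemma hasDerivAt_abs_sub (h : x ≠ c) : HasDerivAt (fun y => |y - c|) (stepSign c x) x := by
  rcases h.lt_or_gt with h | h
  · rw [stepSign_of_le h.le]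
    exact (hasDerivAt_abs_neg (sub_neg.2 h)).comp_sub_const x c
  · rw [stepSign_of_lt h]
    exact (hasDerivAt_abs_pos (sub_pos.2 h)).comp_sub_const x c

lemma integral_stepSign (c a b : ℝ) : ∫ x in a..b, stepSign c x = |b - c| - |a - c| :=
  integral_eq_of_hasDerivAt_off_countable (fun y => |y - c|) _ (countable_singleton c)
    (by fun_prop) (fun _ hx => hasDerivAt_abs_sub hx.2) (intervalIntegrable_stepSign c a b)

end stepSign

/-! ### Sign patterns with unordered interfaces -/

/-- Up to a global sign, the symmetric pattern in the variable `x = |t|`. The interfaces `z i` are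
neither ordered nor distinct, and may lie at the equator `0` or at the pole `1`. -/
noncomputable def signPattern {ι : Type*} [Fintype ι] (z : ι → ℝ) (x : ℝ) : ℝ :=
  ∏ i, stepSign (z i) x

/-- The mass of the pattern between `x` and the pole. -/
noncomputable def tailMass {ι : Type*} [Fintype ι] (z : ι → ℝ) (x : ℝ) : ℝ :=
  ∫ s in x..1, signPattern z s

/-- The nonlocal energy density on the half interval. At the pole `x = 1` it is `0`, both as a
division by zero and as a limit. -/
noncomputable def tailDensity {ι : Type*} [Fintype ι] (z : ι → ℝ) (x : ℝ) : ℝ :=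
  tailMass z x ^ 2 / (1 - x ^ 2)

/-- The nonlocal energy of one hemisphere. -/
noncomputable def tailEnergy {ι : Type*} [Fintype ι] (z : ι → ℝ) : ℝ :=
  ∫ x in (0 : ℝ)..1, tailDensity z x

/-- The admissible configurations, unordered and possibly degenerate: interfaces in `[0, 1]` whose
pattern has mass zero. -/
def zeroMassCube (ι : Type*) [Fintype ι] : Set (ι → ℝ) :=
  {z | z ∈ Icc 0 1 ∧ tailMass z 0 = 0}

/-- The configurations of distinct interfaces away from the equator and the poles. -/
def nondegenerate (ι : Type*) : Set (ι → ℝ) :=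
  {z | Injective z ∧ ∀ i, z i ∈ Ioo 0 1}

/-- The indices of the interfaces which are not at the pole. -/
def properEntries {ι : Type*} (z : ι → ℝ) : Set ι :=
  {i | z i ≠ 1}

/-- A configuration is irredundant if no interface is at the equator and no two interfaces away from
the pole coincide, so that no interface can be moved to the pole without changing the energy. -/
def IsIrredundant {ι : Type*} (z : ι → ℝ) : Prop :=
  (∀ i, z i ≠ 0) ∧ InjOn z (properEntries z)

section signPattern

variable {ι : Type*} [Fintype ι] {z w : ι → ℝ} {b c x : ℝ}

lemma signPattern_mul_self (z : ι → ℝ) (x : ℝ) : signPattern z x * signPattern z x = 1 := by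
  unfold signPattern
  rw [← Finset.prod_mul_distrib]
  exact Finset.prod_eq_one fun i _ => stepSign_mul_self (z i) x

lemma signPattern_ne_zero (z : ι → ℝ) (x : ℝ) : signPattern z x ≠ 0 :=
  left_ne_zero_of_mul_eq_one (signPattern_mul_self z x)

lemma norm_signPattern (z : ι → ℝ) (x : ℝ) : ‖signPattern z x‖ = 1 := by
  rw [Real.norm_eq_abs]
  exact (abs_eq zero_le_one).2 (mul_self_eq_one_iff.1 (signPattern_mul_self z x))

lemma signPattern_update [DecidableEq ι] (z : ι → ℝ) (i : ι) (c x : ℝ) :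
    signPattern (update z i c) x = stepSign c x * stepSign (z i) x * signPattern z x := by
  unfold signPattern
  rw [Fintype.prod_eq_mul_prod_compl i,
    Fintype.prod_eq_mul_prod_compl i (fun k => stepSign (z k) x), update_self, mul_assoc,
    ← mul_assoc (stepSign (z i) x), stepSign_mul_self, one_mul]
  congr 1
  refine Finset.prod_congr rfl fun k hk => ?_
  rw [update_of_ne (by simpa using hk)]

lemma signPattern_comp_perm (z : ι → ℝ) (σ : Equiv.Perm ι) : signPattern (z ∘ σ) = signPattern z :=
  funext fun x => Equiv.prod_comp σ fun i => stepSign (z i) x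

lemma measurable_signPattern (z : ι → ℝ) : Measurable (signPattern z) :=
  Finset.measurable_prod _ fun i _ => measurable_stepSign (z i)

lemma intervalIntegrable_signPattern (z : ι → ℝ) (a b : ℝ) :
    IntervalIntegrable (signPattern z) volume a b :=
  (intervalIntegrable_const (c := (1 : ℝ))).mono_fun
    (measurable_signPattern z).aestronglyMeasurable
    (Eventually.of_forall fun x => by simp only [norm_signPattern, norm_one, le_refl])

lemma continuousAt_signPattern_left (h : x ∉ range z) :
    ContinuousAt (fun z => signPattern z x) z :=
  tendsto_finsetProd _ fun i _ =>
    ContinuousAt.comp (g := fun c => stepSign c x) (f := fun z : ι → ℝ => z i)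
      (continuousAt_stepSign_left fun hi => h ⟨i, hi⟩) (continuous_apply i).continuousAt

/-! ### Mass and energy on a hemisphere -/

lemma integral_signPattern_add_tailMass (z : ι → ℝ) (x y : ℝ) :
    (∫ s in x..y, signPattern z s) + tailMass z y = tailMass z x :=
  intervalIntegral.integral_add_adjacent_intervals (intervalIntegrable_signPattern z _ _)
    (intervalIntegrable_signPattern z _ _)

lemma continuous_tailMass (z : ι → ℝ) : Continuous (tailMass z) := by
  have hsymm : tailMass z = fun x => -∫ s in (1 : ℝ)..x, signPattern z s :=
    funext fun x => intervalIntegral.integral_symm _ _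
  rw [hsymm]
  exact (intervalIntegral.continuous_primitive (intervalIntegrable_signPattern z) 1).neg

lemma continuous_tailMass_left (x : ℝ) : Continuous fun z : ι → ℝ => tailMass z x := by
  refine continuous_iff_continuousAt.2 fun w =>
    intervalIntegral.continuousAt_of_dominated_interval (bound := fun _ => 1)
      (Eventually.of_forall fun z => (measurable_signPattern z).aestronglyMeasurable)
      (Eventually.of_forall fun z => Eventually.of_forall fun s _ => (norm_signPattern z s).le)
      intervalIntegrable_const ?_
  filter_upwards [(finite_range w).countable.ae_notMem volume] with s hs _
    using continuousAt_signPattern_left hs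

lemma abs_tailMass_le (z : ι → ℝ) (hx : x ≤ 1) : |tailMass z x| ≤ 1 - x := by
  have h := intervalIntegral.norm_integral_le_of_norm_le_const (a := x) (b := 1)
    fun s _ => (norm_signPattern z s).le
  rwa [one_mul, abs_of_nonneg (sub_nonneg.2 hx)] at h

lemma tailMass_eq_mul_integral {f : ℝ → ℝ} (hx : x ≤ 1)
    (h : ∀ s ∈ Ioc x 1, signPattern z s = c * f s) :
    tailMass z x = c * ∫ s in x..1, f s := by
  unfold tailMass
  rw [← intervalIntegral.integral_const_mul]
  refine intervalIntegral.integral_congr_ae (Eventually.of_forall fun s hs => h s ?_)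
  rwa [uIoc_of_le hx] at hs

lemma tailMass_eq_of_single_interface (hx : x ≤ 1)
    (h : ∀ s ∈ Ioc x 1, signPattern z s = c * stepSign b s) :
    tailMass z x = c * (|1 - b| - |x - b|) := by
  rw [tailMass_eq_mul_integral hx h, integral_stepSign]

lemma one_sub_sq_nonneg (hx : x ∈ Icc (0 : ℝ) 1) : 0 ≤ 1 - x ^ 2 :=
  sub_nonneg.2 (pow_le_one₀ hx.1 hx.2)

lemma tailDensity_nonneg (z : ι → ℝ) (hx : x ∈ Icc (0 : ℝ) 1) : 0 ≤ tailDensity z x :=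
  div_nonneg (sq_nonneg _) (one_sub_sq_nonneg hx)

lemma tailDensity_le (z : ι → ℝ) (hx : x ∈ Icc (0 : ℝ) 1) : tailDensity z x ≤ 1 - x := by
  have hmass : tailMass z x ^ 2 ≤ (1 - x) ^ 2 :=
    sq_le_sq' (neg_le_of_abs_le (abs_tailMass_le z hx.2)) (le_of_abs_le (abs_tailMass_le z hx.2))
  refine div_le_of_le_mul₀ (one_sub_sq_nonneg hx) (sub_nonneg.2 hx.2) (hmass.trans ?_)
  nlinarith [mul_nonneg hx.1 (sq_nonneg (1 - x))]

lemma norm_tailDensity_le_one (z : ι → ℝ) (hx : x ∈ Icc (0 : ℝ) 1) : ‖tailDensity z x‖ ≤ 1 := by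
  rw [Real.norm_of_nonneg (tailDensity_nonneg z hx)]
  exact (tailDensity_le z hx).trans (sub_le_self 1 hx.1)

lemma continuousOn_tailDensity (z : ι → ℝ) : ContinuousOn (tailDensity z) (Icc 0 1) := by
  intro x hx
  rcases hx.2.eq_or_lt with rfl | hx1
  · have hzero : tailDensity z 1 = 0 := by simp [tailDensity]
    rw [ContinuousWithinAt, hzero]
    refine squeeze_zero' (g := fun x => 1 - x)
      (eventually_mem_nhdsWithin.mono fun x hx => tailDensity_nonneg z hx)
      (eventually_mem_nhdsWithin.mono fun x hx => tailDensity_le z hx) ?_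
    have hlim : ContinuousWithinAt (fun x : ℝ => 1 - x) (Icc 0 1) 1 := by fun_prop
    simpa [ContinuousWithinAt] using hlim
  · have hne : 1 - x ^ 2 ≠ 0 := (sub_pos.2 (pow_lt_one₀ hx.1 hx1 two_ne_zero)).ne'
    have hmass := (continuous_tailMass z).continuousWithinAt (s := Icc 0 1) (x := x)
    exact (hmass.pow 2).div (by fun_prop) hne

lemma continuous_tailEnergy : Continuous (tailEnergy : (ι → ℝ) → ℝ) := by
  refine intervalIntegral.continuous_of_dominated_interval (bound := fun _ => 1)
    (fun z => ?_) (fun z => Eventually.of_forall fun x hx => ?_) intervalIntegrable_const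
    (Eventually.of_forall fun x _ => ((continuous_tailMass_left x).pow 2).div_const _)
  · rw [uIoc_of_le zero_le_one]
    exact ((continuousOn_tailDensity z).mono Ioc_subset_Icc_self).aestronglyMeasurable
      measurableSet_Ioc
  · rw [uIoc_of_le zero_le_one] at hx
    exact norm_tailDensity_le_one z (Ioc_subset_Icc_self hx)

lemma tailEnergy_lt_of_sq_tailMass_le
    (hle : ∀ x ∈ Icc (0 : ℝ) 1, tailMass w x ^ 2 ≤ tailMass z x ^ 2)
    (hlt : ∃ x ∈ Ico (0 : ℝ) 1, tailMass w x ^ 2 < tailMass z x ^ 2) :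
    tailEnergy w < tailEnergy z := by
  obtain ⟨x, hx, hlt⟩ := hlt
  refine intervalIntegral.integral_lt_integral_of_continuousOn_of_le_of_exists_lt zero_lt_one
    (continuousOn_tailDensity w) (continuousOn_tailDensity z) (fun y hy => ?_)
    ⟨x, Ico_subset_Icc_self hx, ?_⟩
  · have hy' := Ioc_subset_Icc_self hy
    exact div_le_div_of_nonneg_right (hle y hy') (one_sub_sq_nonneg hy')
  · exact div_lt_div_of_pos_right hlt (sub_pos.2 (pow_lt_one₀ hx.1 hx.2 two_ne_zero))

lemma tailEnergy_eq_of_signPattern_eq_mul (hc : c ^ 2 = 1)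
    (h : ∀ x ∈ Ioc (0 : ℝ) 1, signPattern w x = c * signPattern z x) :
    tailEnergy w = tailEnergy z := by
  refine intervalIntegral.integral_congr fun x hx => ?_
  rw [uIcc_of_le zero_le_one] at hx
  have hmass : tailMass w x = c * tailMass z x :=
    tailMass_eq_mul_integral hx.2 fun s hs => h s ⟨hx.1.trans_lt hs.1, hs.2⟩
  simp only [tailDensity, hmass, mul_pow, hc, one_mul]

lemma tailMass_comp_perm (z : ι → ℝ) (σ : Equiv.Perm ι) : tailMass (z ∘ σ) = tailMass z := by
  unfold tailMass
  rw [signPattern_comp_perm]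

lemma tailEnergy_comp_perm (z : ι → ℝ) (σ : Equiv.Perm ι) :
    tailEnergy (z ∘ σ) = tailEnergy z := by
  simp only [tailEnergy, tailDensity, tailMass_comp_perm]

end signPattern

/-! ### Degenerate configurations -/

section Entries

variable {ι : Type*} {z : ι → ℝ} {i : ι} {y : ℝ}

lemma notMem_nondegenerate_of_properEntries_ssubset {s : Set ι} (h : properEntries z ⊂ s) :
    z ∉ nondegenerate ι := fun hz => by
  obtain ⟨i, -, hi⟩ := exists_of_ssubset h
  exact (hz.2 i).2.ne (not_not.1 hi)

lemma IsIrredundant.mem_nondegenerate (h : IsIrredundant z) (hz : z ∈ Icc 0 1)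
    (hpole : ∀ i, z i ≠ 1) : z ∈ nondegenerate ι :=
  ⟨fun i j => h.2 (hpole i) (hpole j), fun i =>
    ⟨(hz.1 i).lt_of_ne (h.1 i).symm, (hz.2 i).lt_of_ne (hpole i)⟩⟩

lemma IsIrredundant.exists_outermost [Finite ι] (h : IsIrredundant z)
    (hne : (properEntries z).Nonempty) :
    ∃ m ∈ properEntries z, ∀ k ≠ m, z k = 1 ∨ z k < z m := by
  obtain ⟨m, hm, hmax⟩ := (properEntries z).toFinite.exists_maximalFor z _ hne
  refine ⟨m, hm, fun k hkm => or_iff_not_imp_left.2 fun hk => ?_⟩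
  exact (le_of_not_gt fun hlt => (hmax hk hlt.le).not_gt hlt).lt_of_ne (h.2.ne hk hm hkm)

lemma isOpen_nondegenerate [Finite ι] : IsOpen (nondegenerate ι) := by
  have hinter : nondegenerate ι =
      (⋂ i, ⋂ j, {z | i ≠ j → z i ≠ z j}) ∩ ⋂ i, {z | z i ∈ Ioo 0 1} := by
    ext z
    simp [nondegenerate, Injective, not_imp_not]
  rw [hinter]
  refine (isOpen_iInter_of_finite fun i => isOpen_iInter_of_finite fun j => ?_).inter
    (isOpen_iInter_of_finite fun i => isOpen_Ioo.preimage (continuous_apply i))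
  by_cases hij : i = j
  · simp [hij]
  · simpa [hij] using isOpen_ne_fun (continuous_apply i) (continuous_apply j)

variable [DecidableEq ι]

lemma update_mem_Icc_zero_one (hz : z ∈ Icc 0 1) (hy : y ∈ Icc 0 1) : update z i y ∈ Icc 0 1 :=
  ⟨le_update_iff.2 ⟨hy.1, fun k _ => hz.1 k⟩, update_le_iff.2 ⟨hy.2, fun k _ => hz.2 k⟩⟩

lemma properEntries_update_one (z : ι → ℝ) (i : ι) :
    properEntries (update z i 1) = properEntries z \ {i} := by
  ext k
  by_cases hk : k = i <;> simp [properEntries, update_apply, hk]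

end Entries

section Degenerate

variable {ι : Type*} [Fintype ι] {z w : ι → ℝ} {i j m : ι} {c x δ : ℝ}

lemma isCompact_zeroMassCube (ι : Type*) [Fintype ι] : IsCompact (zeroMassCube ι) :=
  isCompact_Icc.inter_right (isClosed_eq (continuous_tailMass_left 0) continuous_const)

lemma mem_zeroMassCube_of_signPattern_eq_mul (hz : z ∈ zeroMassCube ι) (hw : w ∈ Icc 0 1)
    (h : ∀ x ∈ Ioc (0 : ℝ) 1, signPattern w x = c * signPattern z x) : w ∈ zeroMassCube ι := by
  refine ⟨hw, (tailMass_eq_mul_integral zero_le_one h).trans ?_⟩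
  rw [← tailMass, hz.2, mul_zero]

lemma signPattern_update_one_of_eq_zero [DecidableEq ι] (hi : z i = 0) (hx : x ∈ Ioc (0 : ℝ) 1) :
    signPattern (update z i 1) x = -1 * signPattern z x := by
  rw [signPattern_update, hi, stepSign_of_le hx.2, stepSign_of_lt hx.1, mul_one]

lemma signPattern_update_one_update_one_of_eq [DecidableEq ι] (hij : i ≠ j) (h : z i = z j)
    (hx : x ≤ 1) : signPattern (update (update z i 1) j 1) x = 1 * signPattern z x := by
  rw [signPattern_update, signPattern_update, update_of_ne hij.symm, stepSign_of_le hx, h]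
  linear_combination signPattern z x * stepSign_mul_self (z j) x

lemma exists_properEntries_ssubset (hz : z ∈ zeroMassCube ι) (h : ¬ IsIrredundant z) :
    ∃ w ∈ zeroMassCube ι, tailEnergy w = tailEnergy z ∧ properEntries w ⊂ properEntries z := by
  classical
  have hone : (1 : ℝ) ∈ Icc (0 : ℝ) 1 := ⟨zero_le_one, le_rfl⟩
  by_cases hzero : ∃ i, z i = 0
  · obtain ⟨i, hi⟩ := hzero
    have hsign (x) (hx : x ∈ Ioc (0 : ℝ) 1) := signPattern_update_one_of_eq_zero hi hx
    refine ⟨update z i 1,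
      mem_zeroMassCube_of_signPattern_eq_mul hz (update_mem_Icc_zero_one hz.1 hone) hsign,
      tailEnergy_eq_of_signPattern_eq_mul (by norm_num) hsign, ?_⟩
    rw [properEntries_update_one, sdiff_singleton_ssubset]
    simp [properEntries, hi]
  · obtain ⟨i, hi, j, -, hzij, hij⟩ : ∃ i ∈ properEntries z, ∃ j ∈ properEntries z,
        z i = z j ∧ i ≠ j := by
      simpa [IsIrredundant, InjOn, not_exists.1 hzero] using h
    have hsign (x) (hx : x ∈ Ioc (0 : ℝ) 1) :=
      signPattern_update_one_update_one_of_eq hij hzij hx.2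
    refine ⟨update (update z i 1) j 1, mem_zeroMassCube_of_signPattern_eq_mul hz
      (update_mem_Icc_zero_one (update_mem_Icc_zero_one hz.1 hone) hone) hsign,
      tailEnergy_eq_of_signPattern_eq_mul (one_pow 2) hsign, ?_⟩
    rw [properEntries_update_one, properEntries_update_one]
    exact sdiff_subset.trans_ssubset (sdiff_singleton_ssubset.2 hi)

lemma exists_isIrredundant_of_notMem_nondegenerate (hz : z ∈ zeroMassCube ι)
    (hdeg : z ∉ nondegenerate ι) :
    ∃ w ∈ zeroMassCube ι, tailEnergy w = tailEnergy z ∧ IsIrredundant w ∧ ∃ j, w j = 1 := by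
  obtain ⟨w, ⟨hw, hwz, hwdeg⟩, hmin⟩ := exists_minimalFor_of_wellFoundedLT
    (fun w => w ∈ zeroMassCube ι ∧ tailEnergy w = tailEnergy z ∧ w ∉ nondegenerate ι)
    properEntries ⟨z, hz, rfl, hdeg⟩
  have hirr : IsIrredundant w := by
    by_contra hirr
    obtain ⟨v, hv, hvw, hlt⟩ := exists_properEntries_ssubset hw hirr
    exact hlt.not_subset
      (hmin ⟨hv, hvw.trans hwz, notMem_nondegenerate_of_properEntries_ssubset hlt⟩ hlt.le)
  refine ⟨w, hw, hwz, hirr, ?_⟩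
  by_contra! hpole
  exact hwdeg (hirr.mem_nondegenerate hw.1 hpole)

/-! ### Sliding the polar cap -/

/-- The configuration obtained by sliding the polar cap bounded by the interface `m` towards the
equator by `δ`. The interface `j`, initially at the pole, becomes the new boundary near it. -/
noncomputable def slideCap [DecidableEq ι] (z : ι → ℝ) (m j : ι) (δ : ℝ) : ι → ℝ :=
  update (update z m (z m - δ)) j (1 - δ)

lemma signPattern_eq_mul_stepSign (hm : z m < 1) (hδ : 0 ≤ δ)
    (hgap : ∀ k ≠ m, z k = 1 ∨ z k ≤ z m - δ) (hx : x ∈ Ioc (z m - δ) 1) :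
    signPattern z x = signPattern z 1 * stepSign (z m) x := by
  have hother : ∀ k ≠ m, stepSign (z k) x = stepSign (z k) 1 := fun k hk => by
    rcases hgap k hk with h | h
    · rw [h, stepSign_of_le hx.2, stepSign_of_le le_rfl]
    · rw [stepSign_of_lt (h.trans_lt hx.1), stepSign_of_lt (by linarith)]
  have hprod : signPattern z 1 * signPattern z x = stepSign (z m) x := by
    unfold signPattern
    rw [← Finset.prod_mul_distrib, Fintype.prod_eq_single m fun k hk => by
      rw [hother k hk, stepSign_mul_self], stepSign_of_lt hm, one_mul]
  rw [← hprod, ← mul_assoc, signPattern_mul_self, one_mul]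

lemma tailMass_of_mem_cap (hm : z m < 1) (hδ : 0 ≤ δ)
    (hgap : ∀ k ≠ m, z k = 1 ∨ z k ≤ z m - δ) (hx : x ∈ Icc (z m - δ) 1) :
    tailMass z x = signPattern z 1 * (1 - z m - |x - z m|) := by
  rw [tailMass_eq_of_single_interface hx.2 fun s hs =>
    signPattern_eq_mul_stepSign hm hδ hgap ⟨hx.1.trans_lt hs.1, hs.2⟩,
    abs_of_pos (sub_pos.2 hm)]

variable [DecidableEq ι]

lemma signPattern_slideCap (hm : z m ≠ 1) (hj : z j = 1) (hx : x ≤ 1) :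
    signPattern (slideCap z m j δ) x =
      -(stepSign (1 - δ) x * stepSign (z m - δ) x * stepSign (z m) x * signPattern z x) := by
  have hjm : j ≠ m := fun h => hm (h ▸ hj)
  rw [slideCap, signPattern_update, signPattern_update, update_of_ne hjm, hj, stepSign_of_le hx]
  ring

lemma signPattern_slideCap_of_le (hm : z m < 1) (hj : z j = 1) (hδ : 0 ≤ δ)
    (hx : x ≤ z m - δ) : signPattern (slideCap z m j δ) x = signPattern z x := by
  rw [signPattern_slideCap hm.ne hj (by linarith), stepSign_of_le hx,
    stepSign_of_le (by linarith), stepSign_of_le (by linarith)]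
  ring

lemma signPattern_slideCap_of_mem_cap (hm : z m < 1) (hj : z j = 1) (hδ : 0 ≤ δ)
    (hgap : ∀ k ≠ m, z k = 1 ∨ z k ≤ z m - δ) (hx : x ∈ Ioc (z m - δ) 1) :
    signPattern (slideCap z m j δ) x = -signPattern z 1 * stepSign (1 - δ) x := by
  rw [signPattern_slideCap hm.ne hj hx.2, signPattern_eq_mul_stepSign hm hδ hgap hx,
    stepSign_of_lt hx.1]
  linear_combination -signPattern z 1 * stepSign (1 - δ) x * stepSign_mul_self (z m) x

lemma tailMass_slideCap_of_mem_cap (hm : z m < 1) (hj : z j = 1) (hδ : 0 ≤ δ)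
    (hgap : ∀ k ≠ m, z k = 1 ∨ z k ≤ z m - δ) (hx : x ∈ Icc (z m - δ) 1) :
    tailMass (slideCap z m j δ) x = -signPattern z 1 * (δ - |x - (1 - δ)|) := by
  rw [tailMass_eq_of_single_interface hx.2 fun s hs =>
    signPattern_slideCap_of_mem_cap hm hj hδ hgap ⟨hx.1.trans_lt hs.1, hs.2⟩, sub_sub_cancel,
    abs_of_nonneg hδ]

lemma tailMass_slideCap_of_le (hm : z m < 1) (hj : z j = 1) (hδ : 0 ≤ δ)
    (hgap : ∀ k ≠ m, z k = 1 ∨ z k ≤ z m - δ) (hx : x ≤ z m - δ) :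
    tailMass (slideCap z m j δ) x = tailMass z x := by
  have hmem : z m - δ ∈ Icc (z m - δ) 1 := ⟨le_rfl, by linarith⟩
  have hbase : tailMass (slideCap z m j δ) (z m - δ) = tailMass z (z m - δ) := by
    rw [tailMass_slideCap_of_mem_cap hm hj hδ hgap hmem, tailMass_of_mem_cap hm hδ hgap hmem,
      abs_of_nonpos (by linarith), abs_of_nonpos (by linarith)]
    ring
  rw [← integral_signPattern_add_tailMass _ x (z m - δ), hbase,
    ← integral_signPattern_add_tailMass z x (z m - δ)]
  congr 1
  refine intervalIntegral.integral_congr fun s hs => ?_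
  rw [uIcc_of_le hx] at hs
  exact signPattern_slideCap_of_le hm hj hδ hs.2

lemma sq_tailMass_slideCap_le (hm : z m < 1) (hj : z j = 1) (hδ : 0 ≤ δ) (hδm : δ ≤ 1 - z m)
    (hgap : ∀ k ≠ m, z k = 1 ∨ z k ≤ z m - δ) (hx : x ≤ 1) :
    tailMass (slideCap z m j δ) x ^ 2 ≤ tailMass z x ^ 2 := by
  rcases le_total x (z m - δ) with hcap | hcap
  · rw [tailMass_slideCap_of_le hm hj hδ hgap hcap]
  · rw [tailMass_slideCap_of_mem_cap hm hj hδ hgap ⟨hcap, hx⟩,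
      tailMass_of_mem_cap hm hδ hgap ⟨hcap, hx⟩, mul_pow, mul_pow, neg_sq]
    refine mul_le_mul_of_nonneg_left (sq_le_sq' ?_ ?_) (sq_nonneg _) <;>
      rcases abs_cases (x - z m) with ⟨h, _⟩ | ⟨h, _⟩ <;>
      rcases abs_cases (x - (1 - δ)) with ⟨h', _⟩ | ⟨h', _⟩ <;>
      linarith

lemma sq_tailMass_slideCap_lt (hm : z m < 1) (hj : z j = 1) (hδ : 0 < δ)
    (hgap : ∀ k ≠ m, z k = 1 ∨ z k ≤ z m - δ) (hx : x ∈ Ioo (z m) (1 - δ)) :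
    tailMass (slideCap z m j δ) x ^ 2 < tailMass z x ^ 2 := by
  have hcap : x ∈ Icc (z m - δ) 1 := ⟨by linarith [hx.1], by linarith [hx.2]⟩
  rw [tailMass_slideCap_of_mem_cap hm hj hδ.le hgap hcap, tailMass_of_mem_cap hm hδ.le hgap hcap,
    abs_of_pos (sub_pos.2 hx.1), abs_of_neg (sub_neg.2 hx.2), mul_pow, mul_pow, neg_sq]
  refine mul_lt_mul_of_pos_left (sq_lt_sq' ?_ ?_) (sq_pos_of_ne_zero (signPattern_ne_zero z 1))
  · linarith [hx.2]
  · linarith [hx.2]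

lemma tailEnergy_slideCap_lt (hm₀ : 0 ≤ z m) (hj : z j = 1) (hδ : 0 < δ) (hδm : δ < 1 - z m)
    (hgap : ∀ k ≠ m, z k = 1 ∨ z k ≤ z m - δ) :
    tailEnergy (slideCap z m j δ) < tailEnergy z := by
  have hm : z m < 1 := by linarith
  obtain ⟨x, hx⟩ : (Ioo (z m) (1 - δ)).Nonempty := nonempty_Ioo.2 (by linarith)
  exact tailEnergy_lt_of_sq_tailMass_le
    (fun y hy => sq_tailMass_slideCap_le hm hj hδ.le hδm.le hgap hy.2)
    ⟨x, ⟨hm₀.trans hx.1.le, by linarith [hx.2]⟩, sq_tailMass_slideCap_lt hm hj hδ hgap hx⟩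

lemma slideCap_mem_zeroMassCube (hz : z ∈ zeroMassCube ι) (hj : z j = 1) (hδ : 0 < δ)
    (hm₀ : δ ≤ z m) (hδm : δ < 1 - z m) (hgap : ∀ k ≠ m, z k = 1 ∨ z k ≤ z m - δ) :
    slideCap z m j δ ∈ zeroMassCube ι := by
  have hm : z m < 1 := by linarith
  refine ⟨update_mem_Icc_zero_one (update_mem_Icc_zero_one hz.1 ?_) ?_, ?_⟩
  · exact ⟨by linarith, by linarith⟩
  · exact ⟨by linarith, by linarith⟩
  · rw [tailMass_slideCap_of_le hm hj hδ.le hgap (by linarith), hz.2]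

end Degenerate

section Descent

variable {ι : Type*} [Fintype ι] {z : ι → ℝ} {j : ι}

lemma properEntries_nonempty (hz : tailMass z 0 = 0) : (properEntries z).Nonempty := by
  by_contra! hempty
  have hpole : ∀ i, z i = 1 := fun i => not_not.1 fun hi => hempty.subset hi
  have hsign : ∀ x ∈ Ioc (0 : ℝ) 1, signPattern z x = signPattern z 1 * stepSign 0 x :=
    fun x hx => by
      rw [stepSign_of_lt hx.1, mul_one]
      simp only [signPattern, hpole, stepSign_of_le hx.2, stepSign_of_le le_rfl]
  rw [tailMass_eq_of_single_interface zero_le_one hsign] at hz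
  simp [signPattern_ne_zero] at hz

lemma IsIrredundant.exists_tailEnergy_lt (h : IsIrredundant z) (hz : z ∈ zeroMassCube ι)
    (hj : z j = 1) : ∃ w ∈ zeroMassCube ι, tailEnergy w < tailEnergy z := by
  classical
  obtain ⟨m, hm, hout⟩ := h.exists_outermost (properEntries_nonempty hz.2)
  have hm₀ : 0 < z m := (hz.1.1 m).lt_of_ne (h.1 m).symm
  have hm₁ : z m < 1 := (hz.1.2 m).lt_of_ne hm
  have hsmall : ∀ c > (0 : ℝ), ∀ᶠ δ in 𝓝[>] 0, δ < c := fun c hc =>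
    nhdsWithin_le_nhds (gt_mem_nhds hc)
  have hgap : ∀ᶠ δ in 𝓝[>] 0, ∀ k ≠ m, z k = 1 ∨ z k ≤ z m - δ := by
    refine eventually_all.2 fun k => eventually_imp_distrib_left.2 fun hk => ?_
    rcases hout k hk with h | h
    · exact Eventually.of_forall fun _ => Or.inl h
    · exact (hsmall _ (sub_pos.2 h)).mono fun δ hδ => Or.inr (by linarith)
  obtain ⟨δ, hgap, hδm₀, hδm₁, hδ⟩ := (hgap.and <| (hsmall _ hm₀).and <|
    (hsmall _ (sub_pos.2 hm₁)).and self_mem_nhdsWithin).exists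
  exact ⟨slideCap z m j δ, slideCap_mem_zeroMassCube hz hj hδ hδm₀.le hδm₁ hgap,
    tailEnergy_slideCap_lt hm₀.le hj hδ hδm₁ hgap⟩

lemma exists_tailEnergy_lt_of_notMem_nondegenerate (hz : z ∈ zeroMassCube ι)
    (hdeg : z ∉ nondegenerate ι) : ∃ w ∈ zeroMassCube ι, tailEnergy w < tailEnergy z := by
  obtain ⟨w, hw, hwz, hirr, j, hj⟩ := exists_isIrredundant_of_notMem_nondegenerate hz hdeg
  rw [← hwz]
  exact hirr.exists_tailEnergy_lt hw hj

lemma zeroMassCube_nonempty [Nonempty ι] : (zeroMassCube ι).Nonempty := by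
  classical
  let i := Classical.arbitrary ι
  have hsign : ∀ x ∈ Ioc (0 : ℝ) 1, signPattern (update 1 i (1 / 2)) x =
      -signPattern (1 : ι → ℝ) 1 * stepSign (1 / 2) x := fun x hx => by
    rw [signPattern_update]
    simp only [signPattern, Pi.one_apply, stepSign_of_le hx.2, stepSign_of_le le_rfl]
    ring
  refine ⟨update 1 i (1 / 2), update_mem_Icc_zero_one ⟨zero_le_one, le_rfl⟩ (by norm_num), ?_⟩
  rw [tailMass_eq_of_single_interface zero_le_one hsign]
  norm_num [abs_of_pos]

end Descent

/-! ### Relation with the energy on the sphere -/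

lemma neg_one_pow_mul_neg_one_pow_eq_stepSign_abs {c t : ℝ} (hc : 0 ≤ c) (ht : t ≠ c) :
    (-1 : ℝ) ^ (if c ≤ t then 1 else 0) * (-1) ^ (if -c ≤ t then 1 else 0) = stepSign c |t| := by
  rcases ht.lt_or_gt with h | h
  · by_cases hneg : -c ≤ t
    · rw [stepSign_of_le (abs_le.2 ⟨hneg, h.le⟩), if_neg h.not_ge, if_pos hneg]
      norm_num
    · rw [stepSign_of_lt (lt_abs.2 (Or.inr (by linarith))), if_neg h.not_ge, if_neg hneg]
      norm_num
  · rw [stepSign_of_lt (lt_abs.2 (Or.inl h)), if_pos h.le, if_pos (by linarith)]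
    norm_num

lemma integral_neg_self_comp_abs {f : ℝ → ℝ} {a : ℝ} (ha : 0 ≤ a)
    (hf : IntervalIntegrable f volume 0 a) : ∫ x in -a..a, f |x| = 2 * ∫ x in (0 : ℝ)..a, f x := by
  have hpos : EqOn (fun x => f |x|) f (uIcc 0 a) := fun x hx => by
    rw [uIcc_of_le ha] at hx
    simp only [abs_of_nonneg hx.1]
  have hright : IntervalIntegrable (fun x => f |x|) volume 0 a :=
    hf.congr (hpos.symm.mono uIoc_subset_uIcc)
  have hleft : IntervalIntegrable (fun x => f |x|) volume (-a) 0 :=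
    ((IntervalIntegrable.iff_comp_neg (f := fun x => f |x|)).2 (by simpa using hright)).symm
  have hreflect : ∫ x in -a..0, f |x| = ∫ x in (0 : ℝ)..a, f |x| := by
    simpa using (intervalIntegral.integral_comp_neg (a := 0) (b := a) fun x => f |x|).symm
  rw [← intervalIntegral.integral_add_adjacent_intervals hleft hright, hreflect,
    intervalIntegral.integral_congr hpos, two_mul]

section Sphere

variable {ι : Type*} [Fintype ι] {n : ℕ} {z : Fin n → ℝ} {t x : ℝ}

lemma intervalIntegrable_signPattern_abs (z : ι → ℝ) (a b : ℝ) :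
    IntervalIntegrable (fun s => signPattern z |s|) volume a b :=
  (intervalIntegrable_const (c := (1 : ℝ))).mono_fun
    ((measurable_signPattern z).comp measurable_norm).aestronglyMeasurable
    (Eventually.of_forall fun s => by simp only [norm_signPattern, norm_one, le_refl])

lemma integral_signPattern_abs_eq_tailMass (z : ι → ℝ) (hx : x ∈ Icc 0 1) :
    ∫ s in x..1, signPattern z |s| = tailMass z x := by
  refine intervalIntegral.integral_congr fun s hs => ?_
  rw [uIcc_of_le hx.2] at hs
  simp only [abs_of_nonneg (hx.1.trans hs.1)]

lemma symPattern_eq (hz : 0 ≤ z) (ht : t ∉ range z) :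
    symPattern n (WithLp.toLp 2 z) t = -signPattern z |t| := by
  have hne : ∀ i, t ≠ z i := fun i hi => ht ⟨i, hi.symm⟩
  unfold symPattern signPattern
  rw [pow_succ, pow_add, Finset.card_filter, Finset.card_filter, ← Finset.prod_pow_eq_pow_sum,
    ← Finset.prod_pow_eq_pow_sum, ← Finset.prod_mul_distrib, mul_neg_one, Finset.prod_congr rfl
      fun i _ => neg_one_pow_mul_neg_one_pow_eq_stepSign_abs (hz i) (hne i)]

lemma symXi_eq (hz : 0 ≤ z) (t : ℝ) :
    symXi n (WithLp.toLp 2 z) t = -∫ s in (-1 : ℝ)..t, signPattern z |s| := by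
  rw [← intervalIntegral.integral_neg]
  refine intervalIntegral.integral_congr_ae ?_
  filter_upwards [(finite_range z).countable.ae_notMem volume] with s hs _ using symPattern_eq hz hs

lemma symXi_neg (hz : 0 ≤ z) (hx : x ∈ Icc 0 1) :
    symXi n (WithLp.toLp 2 z) (-x) = -tailMass z x := by
  have hreflect := intervalIntegral.integral_comp_neg (a := x) (b := 1) fun s => signPattern z |s|
  simp only [abs_neg] at hreflect
  rw [symXi_eq hz, ← hreflect, integral_signPattern_abs_eq_tailMass z hx]

lemma symXi_of_mem_zeroMassCube (hz : z ∈ zeroMassCube (Fin n)) (hx : x ∈ Icc 0 1) :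
    symXi n (WithLp.toLp 2 z) x = tailMass z x := by
  have htotal : ∫ s in (-1 : ℝ)..1, signPattern z |s| = 0 := by
    rw [integral_neg_self_comp_abs zero_le_one (intervalIntegrable_signPattern z 0 1),
      ← tailMass, hz.2, mul_zero]
  rw [symXi_eq hz.1.1, neg_eq_iff_add_eq_zero, ← integral_signPattern_abs_eq_tailMass z hx,
    intervalIntegral.integral_add_adjacent_intervals (intervalIntegrable_signPattern_abs z _ _)
      (intervalIntegrable_signPattern_abs z _ _), htotal]

lemma sq_symXi (hz : z ∈ zeroMassCube (Fin n)) (ht : |t| ≤ 1) :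
    symXi n (WithLp.toLp 2 z) t ^ 2 = tailMass z |t| ^ 2 := by
  have habs : |t| ∈ Icc 0 1 := ⟨abs_nonneg t, ht⟩
  rcases abs_choice t with h | h
  · rw [← symXi_of_mem_zeroMassCube hz habs, h]
  · rw [← neg_sq (tailMass z |t|), ← symXi_neg hz.1.1 habs, h, neg_neg]

lemma symEnergy_eq (hz : z ∈ zeroMassCube (Fin n)) (γ : ℝ) :
    symEnergy n γ (WithLp.toLp 2 z) =
      2 * ∑ i, √(1 - z i ^ 2) + γ * (2 * tailEnergy z) := by
  have hdensity : ∫ t in (-1 : ℝ)..1, symXi n (WithLp.toLp 2 z) t ^ 2 / (1 - t ^ 2) =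
      ∫ t in (-1 : ℝ)..1, tailDensity z |t| :=
    intervalIntegral.integral_congr fun t ht => by
      rw [uIcc_of_le (by norm_num)] at ht
      simp only [tailDensity, sq_symXi hz (abs_le.2 ht), sq_abs]
  rw [symEnergy, hdensity, integral_neg_self_comp_abs zero_le_one
    ((continuousOn_tailDensity z).intervalIntegrable_of_Icc zero_le_one), tailEnergy]

/-! ### Ordered configurations -/

lemma signPattern_eq_one_sub_sum_of_monotone (hz : Monotone z) (x : ℝ) :
    signPattern z x = 1 - ∑ i : Fin n, (-1) ^ (n - 1 - (i : ℕ)) * (1 - stepSign (z i) x) := by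
  induction n with
  | zero => simp [signPattern]
  | succ n ih =>
    have hinit : ∏ i : Fin n, stepSign (z i.castSucc) x =
        1 - ∑ i : Fin n, (-1) ^ (n - 1 - (i : ℕ)) * (1 - stepSign (z i.castSucc) x) :=
      ih (hz.comp (Fin.castSuccOrderEmb (n := n)).monotone)
    have hsum : ∑ i : Fin n, (-1 : ℝ) ^ (n - (i : ℕ)) * (1 - stepSign (z i.castSucc) x) =
        -∑ i : Fin n, (-1) ^ (n - 1 - (i : ℕ)) * (1 - stepSign (z i.castSucc) x) := by
      rw [← Finset.sum_neg_distrib]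
      refine Finset.sum_congr rfl fun i _ => ?_
      rw [show n - (i : ℕ) = n - 1 - i + 1 by omega, pow_succ]
      ring
    unfold signPattern
    simp only [Fin.prod_univ_castSucc, Fin.sum_univ_castSucc, Fin.val_castSucc, Fin.val_last,
      add_tsub_cancel_right, tsub_self, pow_zero, one_mul, hsum]
    rcases le_or_gt x (z (Fin.last n)) with hlast | hlast
    · rw [hinit, stepSign_of_le hlast]
      ring
    · have hone : ∀ i : Fin n, stepSign (z i.castSucc) x = 1 := fun i =>
        stepSign_of_lt ((hz (Fin.le_last _)).trans_lt hlast)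
      simp [hone]

lemma tailMass_zero_eq_of_monotone (hz : Monotone z) (hcube : z ∈ Icc 0 1) :
    tailMass z 0 = 1 - 2 * ∑ i : Fin n, (-1) ^ (n - 1 - (i : ℕ)) * z i := by
  have hint : ∀ i, IntervalIntegrable (fun x => 1 - stepSign (z i) x) volume 0 1 := fun i =>
    intervalIntegrable_const.sub (intervalIntegrable_stepSign _ _ _)
  have hintegral : ∀ i, ∫ x in (0 : ℝ)..1, (1 - stepSign (z i) x) = 2 * z i := fun i => by
    have hi : z i ≤ 1 := hcube.2 i
    rw [intervalIntegral.integral_sub intervalIntegrable_const (intervalIntegrable_stepSign _ _ _),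
      integral_stepSign, abs_of_nonneg (sub_nonneg.2 hi), zero_sub, abs_neg,
      abs_of_nonneg (hcube.1 i), intervalIntegral.integral_const, smul_eq_mul]
    ring
  simp only [tailMass, signPattern_eq_one_sub_sum_of_monotone hz]
  rw [intervalIntegral.integral_sub intervalIntegrable_const, intervalIntegral.integral_finsetSum
      fun i _ => (hint i).const_mul _]
  · simp only [intervalIntegral.integral_const_mul, hintegral, Finset.mul_sum,
      intervalIntegral.integral_const, sub_zero, smul_eq_mul, mul_one, mul_left_comm]
  · simpa only [Finset.sum_fn] using IntervalIntegrable.sum Finset.univ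
      (f := fun (i : Fin n) x => (-1) ^ (n - 1 - (i : ℕ)) * (1 - stepSign (z i) x))
      fun i _ => (hint i).const_mul _

lemma mem_massM_inter_simplexZ_iff {z : EuclideanSpace ℝ (Fin n)} :
    z ∈ massM n ∩ simplexZ n ↔
      StrictMono z ∧ z.ofLp ∈ zeroMassCube (Fin n) ∩ nondegenerate (Fin n) := by
  have hmass (hz : Monotone z) (hcube : z.ofLp ∈ Icc 0 1) :
      z ∈ massM n ↔ tailMass z.ofLp 0 = 0 := by
    rw [tailMass_zero_eq_of_monotone hz hcube, massM, mem_ofPred_eq]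
    constructor <;> intro h <;> linarith
  constructor
  · rintro ⟨hM, hmono, hIoo⟩
    have hcube : z.ofLp ∈ Icc 0 1 := ⟨fun i => (hIoo i).1.le, fun i => (hIoo i).2.le⟩
    exact ⟨hmono, ⟨hcube, (hmass hmono.monotone hcube).1 hM⟩, hmono.injective, hIoo⟩
  · rintro ⟨hmono, hz, -, hIoo⟩
    exact ⟨(hmass hmono.monotone hz.1).2 hz.2, hmono, hIoo⟩

lemma exists_mem_massM_inter_simplexZ
    (hz : z ∈ zeroMassCube (Fin n) ∩ nondegenerate (Fin n)) (γ : ℝ) :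
    ∃ w ∈ massM n ∩ simplexZ n,
      symEnergy n γ w = 2 * ∑ i, √(1 - z i ^ 2) + γ * (2 * tailEnergy z) := by
  let σ := Tuple.sort z
  have hσ : z ∘ σ ∈ zeroMassCube (Fin n) :=
    ⟨⟨fun i => hz.1.1.1 (σ i), fun i => hz.1.1.2 (σ i)⟩, by rw [tailMass_comp_perm, hz.1.2]⟩
  have hinj : Injective (z ∘ σ) := hz.2.1.comp σ.injective
  refine ⟨WithLp.toLp 2 (z ∘ σ), mem_massM_inter_simplexZ_iff.2
    ⟨(Tuple.monotone_sort z).strictMono_of_injective hinj, hσ, hinj, fun i => hz.2.2 (σ i)⟩, ?_⟩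
  rw [symEnergy_eq hσ, tailEnergy_comp_perm]
  exact congrArg (2 * · + _) (Equiv.sum_comp σ fun i => √(1 - z i ^ 2))

end Sphere

theorem exists_axisymmetric_local_minimizer_general (n : ℕ) (hn : 1 ≤ n) :
    ∃ γ₀ > (0 : ℝ), ∀ γ ≥ γ₀, ∃ zstar ∈ massM n ∩ simplexZ n,
      IsMinOn (symEnergy n γ) (massM n ∩ simplexZ n) zstar := by
  have : Nonempty (Fin n) := Fin.pos_iff_nonempty.1 hn
  obtain ⟨γ₀, hγ₀, hmin⟩ := exists_forall_ge_exists_isMinOn_add_mul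
    (P := fun z : Fin n → ℝ => 2 * ∑ i, √(1 - z i ^ 2)) (H := fun z => 2 * tailEnergy z)
    (isCompact_zeroMassCube (Fin n)) zeroMassCube_nonempty isOpen_nondegenerate (by fun_prop)
    (continuous_tailEnergy.const_mul 2).continuousOn fun z hz =>
      (exists_tailEnergy_lt_of_notMem_nondegenerate hz.1 hz.2).imp fun w hw =>
        ⟨hw.1, mul_lt_mul_of_pos_left hw.2 two_pos⟩
  refine ⟨γ₀, hγ₀, fun γ hγ => ?_⟩
  obtain ⟨z, hz, hzmin⟩ := hmin γ hγ
  obtain ⟨zstar, hzstar, henergy⟩ := exists_mem_massM_inter_simplexZ hz γ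
  refine ⟨zstar, hzstar, fun y hy => ?_⟩
  have hy' := (mem_massM_inter_simplexZ_iff.1 hy).2.1
  rw [mem_ofPred_eq, henergy, ← WithLp.toLp_ofLp 2 y, symEnergy_eq hy']
  exact hzmin hy'

/-- Theorem: existence of an axisymmetric local minimizer.
For every `n ≥ 1` there is `γ₀ > 0` such that for every `γ ≥ γ₀` the energy `F_γ` admits
a local minimizer in `M ∩ Z`. -/
theorem exists_axisymmetric_local_minimizer (n : ℕ) (hn : 1 ≤ n) :
    ∃ γ₀ > (0 : ℝ), ∀ γ ≥ γ₀,
      ∃ zstar ∈ massM n ∩ simplexZ n, ∃ ε > (0 : ℝ),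
        ∀ z ∈ massM n ∩ simplexZ n, dist z zstar < ε →
          symEnergy n γ zstar ≤ symEnergy n γ z := by
  obtain ⟨γ₀, hγ₀, hmin⟩ := exists_axisymmetric_local_minimizer_general n hn
  exact ⟨γ₀, hγ₀, fun γ hγ => (hmin γ hγ).imp fun _ h =>
    ⟨h.1, 1, one_pos, fun _ hz _ => h.2 hz⟩⟩
end

section
/- Let I ⊂ (0,∞) be a nondegenerate interval. If an axisymmetric configuration −1 < z₁ < ⋯ < z_n < 1 is a critical point of E_γ for every γ ∈ I (with the constant λ allowed to depend on γ), then either n = 1 (a single cap), or n = 2 and z₂ = −z₁ (a symmetric double cap). -/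
/-!
Subtracting the Euler–Lagrange equations for two values of `γ` separates the curvature from the
potential, so the geodesic curvatures of all interfaces agree. The curvature of the `k`-th
interface is an injective function of the signed height `(-1)^(k+1) z_k`, so the signed heights
agree as well. A third interface would then have the height of the first, and a second one is the
mirror image of the first.
-/

/-- The geodesic curvature of the circle of latitude at height `h` on the unit sphere, with respect
to the southward normal, so that small caps around the north pole have positive curvature. The
poles `h = ±1` receive the junk value `0`. -/
noncomputable def latitudeCurvature (h : ℝ) : ℝ :=
  h / Real.sqrt (1 - h ^ 2)

lemma arctan_comp_latitudeCurvature_eqOn :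
    Set.EqOn (Real.arctan ∘ latitudeCurvature) Real.arcsin (Set.Ioo (-1) 1) :=
  fun _ hx => (Real.arcsin_eq_arctan hx).symm

lemma latitudeCurvature_injOn : Set.InjOn latitudeCurvature (Set.Ioo (-1) 1) :=
  ((Real.injOn_arcsin.mono Set.Ioo_subset_Icc_self).congr
    arctan_comp_latitudeCurvature_eqOn.symm).of_comp

lemma latitudeCurvature_neg_one_pow_mul (k : ℕ) (h : ℝ) :
    latitudeCurvature ((-1) ^ k * h) = (-1) ^ k * h / Real.sqrt (1 - h ^ 2) := by
  rw [latitudeCurvature, mul_pow, ← pow_mul, (Even.mul_left even_two k).neg_one_pow, one_mul]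

lemma eq_of_add_mul_eq_add_mul {R : Type*} [CommRing R] [NoZeroDivisors R] {a b x x' y y' : R}
    (hab : a ≠ b) (ha : x + a * y = x' + a * y') (hb : x + b * y = x' + b * y') : x = x' := by
  have hy : y = y' := mul_left_cancel₀ (sub_ne_zero.mpr hab) (by linear_combination ha - hb)
  rwa [hy, add_left_inj] at ha

/-- The height of the `k`-th interface, reflected in the equator when `{u = 1}` lies below it. -/
def signedHeight (z : ℕ → ℝ) (k : ℕ) : ℝ :=
  (-1) ^ (k + 1) * z k

section Interfaces

variable {n : ℕ} {z : ℕ → ℝ} {j k : ℕ}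

lemma IsConfig.signedHeight_mem_Ioo (hz : IsConfig n z) (hk : k ∈ Set.Icc 1 n) :
    signedHeight z k ∈ Set.Ioo (-1) 1 := by
  obtain ⟨hsouth, hnorth, hmono⟩ := hz
  have habove : -1 < z k := hsouth ▸ hmono 0 k hk.1 (Nat.le_succ_of_le hk.2)
  have hbelow : z k < 1 := hnorth ▸ hmono k (n + 1) (Nat.lt_succ_of_le hk.2) le_rfl
  rw [signedHeight, Set.mem_Ioo, ← abs_lt, abs_mul, abs_neg_one_pow, one_mul]
  exact abs_lt.mpr ⟨habove, hbelow⟩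

lemma IsCritical.eulerLagrange_eq {γ : ℝ} (h : IsCritical γ n z)
    (hj : j ∈ Set.Icc 1 n) (hk : k ∈ Set.Icc 1 n) :
    latitudeCurvature (signedHeight z j) + γ * (4 * pot n z (z j)) =
      latitudeCurvature (signedHeight z k) + γ * (4 * pot n z (z k)) := by
  obtain ⟨lam, hlam⟩ := h
  simp only [signedHeight, latitudeCurvature_neg_one_pow_mul]
  linear_combination hlam j hj.1 hj.2 - hlam k hk.1 hk.2

lemma IsConfig.signedHeight_eq_of_isCritical (hz : IsConfig n z) {a b : ℝ} (hab : a ≠ b)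
    (ha : IsCritical a n z) (hb : IsCritical b n z)
    (hj : j ∈ Set.Icc 1 n) (hk : k ∈ Set.Icc 1 n) :
    signedHeight z j = signedHeight z k :=
  latitudeCurvature_injOn (hz.signedHeight_mem_Ioo hj) (hz.signedHeight_mem_Ioo hk) <|
    eq_of_add_mul_eq_add_mul hab (ha.eulerLagrange_eq hj hk) (hb.eulerLagrange_eq hj hk)

end Interfaces

theorem critical_on_interval_single_or_double_cap_general
    {a b : ℝ} (hab : a ≠ b) {n : ℕ} (hn : 1 ≤ n) {z : ℕ → ℝ} (hz : IsConfig n z)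
    (ha : IsCritical a n z) (hb : IsCritical b n z) :
    n = 1 ∨ (n = 2 ∧ z 2 = -z 1) := by
  have heq {k : ℕ} (hk : k ∈ Set.Icc 1 n) : signedHeight z k = signedHeight z 1 :=
    hz.signedHeight_eq_of_isCritical hab ha hb hk ⟨le_rfl, hn⟩
  obtain rfl | rfl | hn3 : n = 1 ∨ n = 2 ∨ 3 ≤ n := by omega
  · exact Or.inl rfl
  · have h21 : -z 2 = z 1 := by simpa [signedHeight, pow_succ] using heq (k := 2) (by simp)
    exact Or.inr ⟨rfl, neg_eq_iff_eq_neg.mp h21⟩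
  · have h31 : z 3 = z 1 := by
      simpa [signedHeight, pow_succ] using heq (k := 3) ⟨by norm_num, hn3⟩
    exact absurd h31 (hz.2.2 1 3 (by norm_num) (by omega)).ne'

/-- Proposition: critical for an interval of `γ`-values.  If an
axisymmetric configuration is a critical point of `E_γ` for every `γ` in a nondegenerate
interval `I ⊆ (0,∞)`, then it is a single cap (`n = 1`) or a symmetric double cap
(`n = 2` with `z 2 = -z 1`). -/
theorem critical_on_interval_single_or_double_cap
    (I : Set ℝ) (hI : I.OrdConnected) (hIpos : I ⊆ Set.Ioi (0 : ℝ))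
    (hInd : ∃ a ∈ I, ∃ b ∈ I, a < b)
    (n : ℕ) (hn : 1 ≤ n) (z : ℕ → ℝ) (hz : IsConfig n z)
    (hcrit : ∀ γ ∈ I, IsCritical γ n z) :
    n = 1 ∨ (n = 2 ∧ z 2 = -z 1) := by
  obtain ⟨a, ha, b, hb, hab⟩ := hInd
  exact critical_on_interval_single_or_double_cap_general hab.ne hn hz (hcrit a ha) (hcrit b hb)
end

section
/- The limit as z₁ → 0⁺ of the quantity −(z₁/√(1−z₁²)) / (4·(z₁ log(1+z₁) + (1−z₁) log(1−z₁))) equals 1/4. (This quantity is the unique value of γ for which the axisymmetric pattern with three interfaces at −z₁, 0, z₁ is a critical point of E_γ; hence these critical points exist only for γ > 1/4.) -/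
/-! Numerator and denominator both vanish at `0`, where their derivatives are `-1` and `-4`.
Dividing each by `z₁` turns the quotient into a quotient of difference quotients, so it tends to
`-1 / -4`. -/

open Filter Topology

theorem tendsto_div_of_hasDerivAt_of_eq_zero {𝕜 : Type*} [NontriviallyNormedField 𝕜]
    {f g : 𝕜 → 𝕜} {f' g' a : 𝕜} (hf : HasDerivAt f f' a) (hg : HasDerivAt g g' a)
    (hfa : f a = 0) (hga : g a = 0) (hg' : g' ≠ 0) :
    Tendsto (fun x => f x / g x) (𝓝[≠] a) (𝓝 (f' / g')) := by
  refine (hf.tendsto_slope.div hg.tendsto_slope hg').congr' ?_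
  filter_upwards [self_mem_nhdsWithin] with x (hx : x ≠ a)
  simp only [Pi.div_apply, slope_def_field, hfa, hga, sub_zero]
  exact div_div_div_cancel_right₀ (sub_ne_zero.2 hx) (f x) (g x)

theorem hasDerivAt_div_sqrt_one_sub_sq {x : ℝ} (hx : x ^ 2 < 1) :
    HasDerivAt (fun z : ℝ => z / √(1 - z ^ 2)) (1 / √(1 - x ^ 2) ^ 3) x := by
  have hpos : 0 < 1 - x ^ 2 := sub_pos.2 hx
  have hsqrt_ne : √(1 - x ^ 2) ≠ 0 := (Real.sqrt_pos.2 hpos).ne'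
  have hsq : √(1 - x ^ 2) ^ 2 = 1 - x ^ 2 := Real.sq_sqrt hpos.le
  have hsqrt : HasDerivAt (fun z : ℝ => √(1 - z ^ 2)) (-(2 * x) / (2 * √(1 - x ^ 2))) x := by
    simpa using ((hasDerivAt_pow 2 x).const_sub 1).sqrt hpos.ne'
  refine ((hasDerivAt_id x).div hsqrt hsqrt_ne).congr_deriv ?_
  simp only [id_eq]
  field_simp
  linear_combination hsq

theorem hasDerivAt_mul_log_one_add_add_mul_log_one_sub {x : ℝ}
    (hadd : 1 + x ≠ 0) (hsub : 1 - x ≠ 0) :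
    HasDerivAt (fun z : ℝ => z * Real.log (1 + z) + (1 - z) * Real.log (1 - z))
      (Real.log (1 + x) + x / (1 + x) - Real.log (1 - x) - 1) x := by
  have hd_add : HasDerivAt (fun z : ℝ => 1 + z) 1 x := (hasDerivAt_id x).const_add 1
  have hd_sub : HasDerivAt (fun z : ℝ => 1 - z) (-1) x := (hasDerivAt_id x).const_sub 1
  refine (((hasDerivAt_id x).mul (hd_add.log hadd)).add
    (hd_sub.mul (hd_sub.log hsub))).congr_deriv ?_
  simp only [id_eq]
  field_simp
  ring

theorem gamma_three_interfaces_limit_general :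
    Tendsto
      (fun z : ℝ => -(z / √(1 - z ^ 2))
        / (4 * (z * Real.log (1 + z) + (1 - z) * Real.log (1 - z))))
      (𝓝[≠] 0) (𝓝 (1 / 4)) := by
  have hnum : HasDerivAt (fun z : ℝ => -(z / √(1 - z ^ 2))) (-1) 0 := by
    simpa using (hasDerivAt_div_sqrt_one_sub_sq (x := 0) (by norm_num)).fun_neg
  have hden : HasDerivAt
      (fun z : ℝ => 4 * (z * Real.log (1 + z) + (1 - z) * Real.log (1 - z))) (-4) 0 := by
    simpa using (hasDerivAt_mul_log_one_add_add_mul_log_one_sub (x := 0)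
      (by norm_num) (by norm_num)).const_mul 4
  have hlim := tendsto_div_of_hasDerivAt_of_eq_zero hnum hden (by simp) (by simp) (by norm_num)
  rwa [neg_div_neg_eq] at hlim

/-- The value
`γ(z₁) = −(z₁/√(1−z₁²)) / (4(z₁ log(1+z₁) + (1−z₁) log(1−z₁)))` of the parameter for
which the three-interface pattern `(-z₁, 0, z₁)` is critical tends to `1/4` as
`z₁ → 0⁺`; hence these critical points exist only for `γ > 1/4`. -/
theorem gamma_three_interfaces_limit :
    Filter.Tendsto
      (fun z₁ : ℝ => -(z₁ / Real.sqrt (1 - z₁ ^ 2))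
        / (4 * (z₁ * Real.log (1 + z₁) + (1 - z₁) * Real.log (1 - z₁))))
      (nhdsWithin 0 (Set.Ioi 0)) (nhds (1 / 4)) :=
  gamma_three_interfaces_limit_general.mono_left (nhdsGT_le_nhdsNE 0)
end
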